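/- arXiv:math/0601254 — 2 statements merged into one kernel-verified Lean document; each statement's English description precedes it below -/
import Mathlib

section
/- Let L be a commutative subspace lattice on H and Φ a rank preserving linear map on Alg L. Let N ∈ L with dim N = 1 and dim N₋^⊥ ≥ 2, let x be a nonzero vector in N, let f, g be linearly independent vectors in N₋^⊥, and suppose u, v, p, q are nonzero vectors in H with Φ(x⊗f*) = u⊗v* and Φ(x⊗g*) = p⊗q*. Then exactly one of the following holds: (1) u ∼ p and v ≁ q; (2) u ≁ p and v ∼ q. -/
open scoped InnerProductSpace

noncomputable section

/-- The join (closed linear span) of a family of subspaces of a Hilbert space. -/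
def closedJoin {H : Type*} [NormedAddCommGroup H] [InnerProductSpace ℂ H]
    (S : Set (Submodule ℂ H)) : Submodule ℂ H :=
  (sSup S).topologicalClosure

/-- A subspace lattice on `H`: a family of closed subspaces containing `{0}` and `H`,
closed under arbitrary intersections and arbitrary closed linear spans. -/
structure IsSubspaceLattice {H : Type*} [NormedAddCommGroup H] [InnerProductSpace ℂ H]
    (L : Set (Submodule ℂ H)) : Prop where
  isClosed : ∀ E ∈ L, IsClosed (E : Set H)
  bot_mem : ⊥ ∈ L
  top_mem : ⊤ ∈ L
  sInf_mem : ∀ S : Set (Submodule ℂ H), S ⊆ L → sInf S ∈ L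
  join_mem : ∀ S : Set (Submodule ℂ H), S ⊆ L → closedJoin S ∈ L

/-- `M₋`: the join of all members of `L` that do not contain `M`. -/
def minus {H : Type*} [NormedAddCommGroup H] [InnerProductSpace ℂ H]
    (L : Set (Submodule ℂ H)) (M : Submodule ℂ H) : Submodule ℂ H :=
  closedJoin {E | E ∈ L ∧ ¬ M ≤ E}

open Classical in
/-- The orthogonal projection of `H` onto a closed subspace `E`, as an operator on `H`
(junk value `0` if `E` is not closed). -/
def projOf {H : Type*} [NormedAddCommGroup H] [InnerProductSpace ℂ H] [CompleteSpace H]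
    (E : Submodule ℂ H) : H →L[ℂ] H :=
  if h : IsClosed (E : Set H) then
    haveI : CompleteSpace E := h.completeSpace_coe
    E.subtypeL.comp (Submodule.orthogonalProjection E)
  else 0

/-- A commutative subspace lattice: the orthogonal projections onto members commute. -/
structure IsCSL {H : Type*} [NormedAddCommGroup H] [InnerProductSpace ℂ H] [CompleteSpace H]
    (L : Set (Submodule ℂ H)) extends IsSubspaceLattice L : Prop where
  commutes : ∀ E ∈ L, ∀ F ∈ L, projOf E * projOf F = projOf F * projOf E

/-- Complete distributivity of the lattice `L` (meets are intersections, joins are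
closed linear spans). -/
def IsCompletelyDistributive {H : Type*} [NormedAddCommGroup H] [InnerProductSpace ℂ H]
    (L : Set (Submodule ℂ H)) : Prop :=
  ∀ (I : Type) (J : I → Type) (E : (i : I) → J i → Submodule ℂ H),
    (∀ i j, E i j ∈ L) →
     ((⨅ i, closedJoin (Set.range (E i)))
        = closedJoin (Set.range fun φ : (∀ i, J i) => ⨅ i, E i (φ i)))
    ∧ (closedJoin (Set.range fun i => ⨅ j, E i j)
        = ⨅ φ : (∀ i, J i), closedJoin (Set.range fun i => E i (φ i)))

/-- `Alg L`: all bounded operators leaving every member of `L` invariant. -/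
def algL {H : Type*} [NormedAddCommGroup H] [InnerProductSpace ℂ H]
    (L : Set (Submodule ℂ H)) : Set (H →L[ℂ] H) :=
  {T | ∀ E ∈ L, ∀ x ∈ E, T x ∈ E}

/-- The rank one operator `x ⊗ f* : h ↦ ⟨h, f⟩ x`. -/
def rankOne {H : Type*} [NormedAddCommGroup H] [InnerProductSpace ℂ H]
    (x f : H) : H →L[ℂ] H :=
  (innerSL ℂ f).smulRight x

/-- The rank of a bounded operator: the dimension of its range. -/
def opRank {H : Type*} [NormedAddCommGroup H] [InnerProductSpace ℂ H]
    (T : H →L[ℂ] H) : Cardinal :=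
  Module.rank ℂ (LinearMap.range (T : H →ₗ[ℂ] H))

/-- `Φ` is a linear map of `Alg L` into itself. -/
structure IsLinearOnAlg {H : Type*} [NormedAddCommGroup H] [InnerProductSpace ℂ H]
    (L : Set (Submodule ℂ H)) (Φ : (H →L[ℂ] H) → (H →L[ℂ] H)) : Prop where
  maps : ∀ A ∈ algL L, Φ A ∈ algL L
  map_add : ∀ A ∈ algL L, ∀ B ∈ algL L, Φ (A + B) = Φ A + Φ B
  map_smul : ∀ (c : ℂ), ∀ A ∈ algL L, Φ (c • A) = c • Φ A

/-- `Φ` preserves the rank of every finite rank operator in `Alg L`. -/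
def RankPreserving {H : Type*} [NormedAddCommGroup H] [InnerProductSpace ℂ H]
    (L : Set (Submodule ℂ H)) (Φ : (H →L[ℂ] H) → (H →L[ℂ] H)) : Prop :=
  ∀ A ∈ algL L, opRank A < Cardinal.aleph0 → opRank (Φ A) = opRank A

/-- `a ∼ b`: (nonzero) vectors `a` and `b` are linearly dependent. -/
def Dep {H : Type*} [NormedAddCommGroup H] [InnerProductSpace ℂ H] (a b : H) : Prop :=
  ∃ c : ℂ, c ≠ 0 ∧ b = c • a

/-- `N` is consistent with respect to `Φ`. -/
def Consistent {H : Type*} [NormedAddCommGroup H] [InnerProductSpace ℂ H]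
    (L : Set (Submodule ℂ H)) (Φ : (H →L[ℂ] H) → (H →L[ℂ] H))
    (N : Submodule ℂ H) : Prop :=
  N ≠ ⊥ ∧ minus L N ≠ ⊤ ∧
    ∃ (U : N →ₗ[ℂ] H) (V : ((minus L N)ᗮ : Submodule ℂ H) →ₗ[ℂ] H),
      ∀ (x : N) (f : ((minus L N)ᗮ : Submodule ℂ H)),
        Φ (rankOne (x : H) (f : H)) = rankOne (U x) (V f)

/-- `N` is twisted with respect to `Φ`. -/
def Twisted {H : Type*} [NormedAddCommGroup H] [InnerProductSpace ℂ H]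
    (L : Set (Submodule ℂ H)) (Φ : (H →L[ℂ] H) → (H →L[ℂ] H))
    (N : Submodule ℂ H) : Prop :=
  N ≠ ⊥ ∧ minus L N ≠ ⊤ ∧
    ∃ (U : ((minus L N)ᗮ : Submodule ℂ H) →ₗ⋆[ℂ] H) (V : N →ₗ⋆[ℂ] H),
      ∀ (x : N) (f : ((minus L N)ᗮ : Submodule ℂ H)),
        Φ (rankOne (x : H) (f : H)) = rankOne (U f) (V x)

/-- `N` is isolated: `dim N = 1` and `N^⊥ ∈ L`. -/
def Isolated {H : Type*} [NormedAddCommGroup H] [InnerProductSpace ℂ H]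
    (L : Set (Submodule ℂ H)) (N : Submodule ℂ H) : Prop :=
  Module.rank ℂ N = 1 ∧ Nᗮ ∈ L

/-- The family `F` of all `N ∈ L` with `N ≠ {0}` and `N₋ ≠ H`. -/
def famF {H : Type*} [NormedAddCommGroup H] [InnerProductSpace ℂ H]
    (L : Set (Submodule ℂ H)) : Set (Submodule ℂ H) :=
  {N | N ∈ L ∧ N ≠ ⊥ ∧ minus L N ≠ ⊤}

/-- Subspaces are comparable if one contains the other. -/
def Comparable' {H : Type*} [NormedAddCommGroup H] [InnerProductSpace ℂ H]
    (M N : Submodule ℂ H) : Prop :=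
  M ≤ N ∨ N ≤ M

/-- There is a chain in `F` from `M` to `N`. -/
def ChainConn {H : Type*} [NormedAddCommGroup H] [InnerProductSpace ℂ H]
    (L : Set (Submodule ℂ H)) (M N : Submodule ℂ H) : Prop :=
  ∃ (n : ℕ) (c : Fin (n + 1) → Submodule ℂ H),
    (∀ k, c k ∈ famF L) ∧ c 0 = M ∧ c (Fin.last n) = N ∧
      ∀ k : Fin n, Comparable' (c k.castSucc) (c k.succ)

/-- `𝔊_N`: all members of `F` that can be connected to `N` by a chain. -/
def GSet {H : Type*} [NormedAddCommGroup H] [InnerProductSpace ℂ H]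
    (L : Set (Submodule ℂ H)) (N : Submodule ℂ H) : Set (Submodule ℂ H) :=
  {M | M ∈ famF L ∧ ChainConn L N M}

end

/- Since `x ≠ 0`, the operators `x ⊗ f*` and `x ⊗ g*` are linearly independent, and a rank
preserving map, being injective on finite rank operators, keeps them so; hence `u ∼ p` and `v ∼ q`
cannot both hold. Their sum `x ⊗ (f + g)*` has rank at most one, and so does its image
`u ⊗ v* + p ⊗ q*`; but that operator has rank two when both `u ≁ p` and `v ≁ q`. -/

section InnerProductSpace

variable {𝕜 E F ι : Type*} [RCLike 𝕜] [NormedAddCommGroup E] [InnerProductSpace 𝕜 E]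
  [NormedAddCommGroup F] [NormedSpace 𝕜 F]

-- The solution is sought in the span of `v`, where the system is governed by the Gram matrix.
theorem exists_forall_inner_eq_of_linearIndependent [Finite ι] {v : ι → E}
    (hv : LinearIndependent 𝕜 v) (a : ι → 𝕜) : ∃ y, ∀ i, inner 𝕜 (v i) y = a i := by
  classical
  have := Fintype.ofFinite ι
  have hdet : IsUnit (Matrix.gram 𝕜 v).det :=
    (Matrix.det_gram_ne_zero_iff_linearIndependent.2 hv).isUnit
  refine ⟨∑ j, ((Matrix.gram 𝕜 v)⁻¹.mulVec a) j • v j, fun i ↦ ?_⟩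
  calc
    inner 𝕜 (v i) (∑ j, ((Matrix.gram 𝕜 v)⁻¹.mulVec a) j • v j)
      = (Matrix.gram 𝕜 v).mulVec ((Matrix.gram 𝕜 v)⁻¹.mulVec a) i := by
        simp [inner_sum, inner_smul_right, Matrix.mulVec_eq_sum, mul_comm]
    _ = a i := by rw [Matrix.mulVec_mulVec, Matrix.mul_nonsing_inv _ hdet, Matrix.one_mulVec]

theorem range_sum_rankOne [Fintype ι] (u : ι → F) {v : ι → E} (hv : LinearIndependent 𝕜 v) :
    (∑ i, InnerProductSpace.rankOne 𝕜 (u i) (v i)).toLinearMap.range =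
      Submodule.span 𝕜 (Set.range u) := by
  ext w
  simp only [LinearMap.mem_range, ContinuousLinearMap.coe_coe, sum_apply,
    InnerProductSpace.rankOne_apply, Submodule.mem_span_range_iff_exists_fun]
  constructor
  · rintro ⟨y, rfl⟩
    exact ⟨fun i ↦ inner 𝕜 (v i) y, rfl⟩
  · rintro ⟨c, rfl⟩
    obtain ⟨y, hy⟩ := exists_forall_inner_eq_of_linearIndependent hv c
    exact ⟨y, by simp only [hy]⟩

theorem finrank_range_sum_rankOne [Fintype ι] {u : ι → F} {v : ι → E}
    (hu : LinearIndependent 𝕜 u) (hv : LinearIndependent 𝕜 v) :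
    Module.finrank 𝕜 (∑ i, InnerProductSpace.rankOne 𝕜 (u i) (v i)).toLinearMap.range =
      Fintype.card ι := by
  rw [range_sum_rankOne u hv, finrank_span_eq_card hu]

theorem linearIndependent_rankOne_right {x : F} (hx : x ≠ 0) {f : ι → E}
    (hf : LinearIndependent 𝕜 f) :
    LinearIndependent 𝕜 fun i ↦ InnerProductSpace.rankOne 𝕜 x (f i) :=
  hf.map_of_injective_injective (starRingEnd 𝕜)
    (InnerProductSpace.rankOne 𝕜 x).toLinearMap.toAddMonoidHom
    (fun _ ↦ (map_eq_zero _).1)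
    (fun _ h ↦ (InnerProductSpace.rankOne_eq_zero.1 h).resolve_left hx)
    (fun _ _ ↦ by simp)

theorem linearIndependent_or_of_linearIndependent_rankOne {u p : F} {v q : E}
    (h : LinearIndependent 𝕜
      ![InnerProductSpace.rankOne 𝕜 u v, InnerProductSpace.rankOne 𝕜 p q]) :
    LinearIndependent 𝕜 ![u, p] ∨ LinearIndependent 𝕜 ![v, q] := by
  have huv : u ≠ 0 ∧ v ≠ 0 := by simpa using h.ne_zero 0
  rw [LinearIndependent.pair_iff' huv.1, LinearIndependent.pair_iff' huv.2]
  by_contra! hdep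
  obtain ⟨⟨c, rfl⟩, d, rfl⟩ := hdep
  refine (LinearIndependent.pair_iff' (h.ne_zero 0)).1 h (c * starRingEnd 𝕜 d) ?_
  simp [mul_smul, smul_comm c]

theorem xor_linearIndependent_of_rank_add_le_one {u p : F} {v q : E}
    (hindep : LinearIndependent 𝕜
      ![InnerProductSpace.rankOne 𝕜 u v, InnerProductSpace.rankOne 𝕜 p q])
    (hrank : (InnerProductSpace.rankOne 𝕜 u v +
      InnerProductSpace.rankOne 𝕜 p q).toLinearMap.rank ≤ 1) :
    Xor (LinearIndependent 𝕜 ![u, p]) (LinearIndependent 𝕜 ![v, q]) := by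
  refine (xor_iff_or_and_not_and _ _).2
    ⟨linearIndependent_or_of_linearIndependent_rankOne hindep, fun ⟨hup, hvq⟩ ↦ ?_⟩
  have htwo := finrank_range_sum_rankOne hup hvq
  rw [Fin.sum_univ_two, Fintype.card_fin] at htwo
  have hone := Module.finrank_le_of_rank_le (n := 1) (hrank.trans_eq Nat.cast_one.symm)
  exact absurd (htwo.symm.trans_le hone) (by norm_num)

end InnerProductSpace

section OperatorRank

variable {H : Type*} [NormedAddCommGroup H] [InnerProductSpace ℂ H]

theorem opRank_eq_zero {T : H →L[ℂ] H} : opRank T = 0 ↔ T = 0 := by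
  rw [opRank, Submodule.rank_eq_zero, LinearMap.range_eq_bot,
    ← ContinuousLinearMap.toLinearMap_zero, ContinuousLinearMap.coe_inj]

theorem opRank_add_le (S T : H →L[ℂ] H) : opRank (S + T) ≤ opRank S + opRank T :=
  LinearMap.rank_add_le (S : H →ₗ[ℂ] H) T

theorem opRank_smul_le (c : ℂ) (T : H →L[ℂ] H) : opRank (c • T) ≤ opRank T :=
  Submodule.rank_mono (by
    rintro _ ⟨y, rfl⟩
    exact Submodule.smul_mem _ c ⟨y, rfl⟩)

theorem opRank_rankOne_le_one (x f : H) : opRank (rankOne x f) ≤ 1 :=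
  (rank_submodule_le_one_iff' _).2 ⟨x, by
    rintro _ ⟨y, rfl⟩
    exact Submodule.mem_span_singleton.2 ⟨inner ℂ f y, rfl⟩⟩

theorem opRank_rankOne_lt_aleph0 (x f : H) : opRank (rankOne x f) < Cardinal.aleph0 :=
  (opRank_rankOne_le_one x f).trans_lt Cardinal.one_lt_aleph0

end OperatorRank

section AlgL

variable {H : Type*} [NormedAddCommGroup H] [InnerProductSpace ℂ H]
  {L : Set (Submodule ℂ H)} {Φ : (H →L[ℂ] H) → (H →L[ℂ] H)} {A B : H →L[ℂ] H}

theorem add_mem_algL (hA : A ∈ algL L) (hB : B ∈ algL L) : A + B ∈ algL L :=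
  fun E hE y hy ↦ E.add_mem (hA E hE y hy) (hB E hE y hy)

theorem smul_mem_algL (c : ℂ) (hA : A ∈ algL L) : c • A ∈ algL L :=
  fun E hE y hy ↦ E.smul_mem c (hA E hE y hy)

theorem le_minus {E N : Submodule ℂ H} (hE : E ∈ L) (hNE : ¬ N ≤ E) : E ≤ minus L N :=
  (le_sSup (show E ∈ {E | E ∈ L ∧ ¬ N ≤ E} from ⟨hE, hNE⟩)).trans
    (Submodule.le_topologicalClosure _)

theorem rankOne_mem_algL {N : Submodule ℂ H} {x f : H} (hx : x ∈ N) (hf : f ∈ (minus L N)ᗮ) :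
    rankOne x f ∈ algL L := by
  intro E hE y hy
  change inner ℂ f y • x ∈ E
  by_cases hNE : N ≤ E
  · exact E.smul_mem _ (hNE hx)
  · rw [Submodule.inner_left_of_mem_orthogonal (le_minus hE hNE hy) hf, zero_smul]
    exact E.zero_mem

theorem RankPreserving.eq_zero_of_map_eq_zero (hrank : RankPreserving L Φ) (hA : A ∈ algL L)
    (hfin : opRank A < Cardinal.aleph0) (hzero : Φ A = 0) : A = 0 := by
  rw [← opRank_eq_zero, ← hrank A hA hfin, opRank_eq_zero, hzero]

theorem RankPreserving.linearIndependent_map_pair (hrank : RankPreserving L Φ)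
    (hlin : IsLinearOnAlg L Φ) (hA : A ∈ algL L) (hB : B ∈ algL L)
    (hAfin : opRank A < Cardinal.aleph0) (hBfin : opRank B < Cardinal.aleph0)
    (hAB : LinearIndependent ℂ ![A, B]) : LinearIndependent ℂ ![Φ A, Φ B] := by
  rw [LinearIndependent.pair_iff] at hAB ⊢
  intro s t hst
  have hsA := smul_mem_algL s hA
  have htB := smul_mem_algL t hB
  have hfin : opRank (s • A + t • B) < Cardinal.aleph0 :=
    (opRank_add_le _ _).trans_lt <| Cardinal.add_lt_aleph0
      ((opRank_smul_le s A).trans_lt hAfin) ((opRank_smul_le t B).trans_lt hBfin)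
  refine hAB s t (hrank.eq_zero_of_map_eq_zero (add_mem_algL hsA htB) hfin ?_)
  rw [hlin.map_add _ hsA _ htB, hlin.map_smul s A hA, hlin.map_smul t B hB, hst]

section RankOne

variable {N : Submodule ℂ H} {x f g : H}

theorem RankPreserving.linearIndependent_map_rankOne (hrank : RankPreserving L Φ)
    (hlin : IsLinearOnAlg L Φ) (hx : x ∈ N) (hx0 : x ≠ 0) (hf : f ∈ (minus L N)ᗮ)
    (hg : g ∈ (minus L N)ᗮ) (hfg : LinearIndependent ℂ ![f, g]) :
    LinearIndependent ℂ ![Φ (rankOne x f), Φ (rankOne x g)] := by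
  have hpair : (fun i ↦ InnerProductSpace.rankOne ℂ x (![f, g] i)) =
      ![rankOne x f, rankOne x g] := funext (Fin.forall_fin_two.2 ⟨rfl, rfl⟩)
  exact hrank.linearIndependent_map_pair hlin (rankOne_mem_algL hx hf) (rankOne_mem_algL hx hg)
    (opRank_rankOne_lt_aleph0 x f) (opRank_rankOne_lt_aleph0 x g)
    (hpair ▸ linearIndependent_rankOne_right hx0 hfg)

theorem RankPreserving.opRank_map_rankOne_add_le_one (hrank : RankPreserving L Φ)
    (hlin : IsLinearOnAlg L Φ) (hx : x ∈ N) (hf : f ∈ (minus L N)ᗮ) (hg : g ∈ (minus L N)ᗮ) :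
    opRank (Φ (rankOne x f) + Φ (rankOne x g)) ≤ 1 := by
  have hsum : rankOne x (f + g) = rankOne x f + rankOne x g :=
    map_add (InnerProductSpace.rankOne ℂ x) f g
  rw [← hlin.map_add _ (rankOne_mem_algL hx hf) _ (rankOne_mem_algL hx hg), ← hsum,
    hrank _ (rankOne_mem_algL hx (add_mem hf hg)) (opRank_rankOne_lt_aleph0 x _)]
  exact opRank_rankOne_le_one x (f + g)

end RankOne

end AlgL

theorem not_dep_iff_linearIndependent {H : Type*} [NormedAddCommGroup H] [InnerProductSpace ℂ H]
    {a b : H} (ha : a ≠ 0) (hb : b ≠ 0) : ¬ Dep a b ↔ LinearIndependent ℂ ![a, b] := by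
  rw [LinearIndependent.pair_iff' ha, Dep]
  push Not
  refine forall_congr' fun c ↦ ⟨fun h hcb ↦ h ?_ hcb.symm, fun h _ hbc ↦ h hbc.symm⟩
  rintro rfl
  exact hb (by rw [← hcb, zero_smul])

theorem stmt_3_general {H : Type*} [NormedAddCommGroup H] [InnerProductSpace ℂ H]
    {L : Set (Submodule ℂ H)} {Φ : (H →L[ℂ] H) → (H →L[ℂ] H)} (hlin : IsLinearOnAlg L Φ)
    (hrank : RankPreserving L Φ) {N : Submodule ℂ H} {x f g u v p q : H}
    (hx : x ∈ N) (hx0 : x ≠ 0)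
    (hf : f ∈ (minus L N)ᗮ) (hg : g ∈ (minus L N)ᗮ) (hfg : LinearIndependent ℂ ![f, g])
    (hE : Φ (rankOne x f) = rankOne u v) (hF : Φ (rankOne x g) = rankOne p q) :
    Xor (Dep u p ∧ ¬ Dep v q) (¬ Dep u p ∧ Dep v q) := by
  have hindep : LinearIndependent ℂ ![rankOne u v, rankOne p q] :=
    hE ▸ hF ▸ hrank.linearIndependent_map_rankOne hlin hx hx0 hf hg hfg
  have hone : opRank (rankOne u v + rankOne p q) ≤ 1 :=
    hE ▸ hF ▸ hrank.opRank_map_rankOne_add_le_one hlin hx hf hg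
  have huv : u ≠ 0 ∧ v ≠ 0 :=
    not_or.1 fun h ↦ hindep.ne_zero 0 (InnerProductSpace.rankOne_eq_zero.2 h)
  have hpq : p ≠ 0 ∧ q ≠ 0 :=
    not_or.1 fun h ↦ hindep.ne_zero 1 (InnerProductSpace.rankOne_eq_zero.2 h)
  have hxor := xor_linearIndependent_of_rank_add_le_one hindep hone
  rw [← not_dep_iff_linearIndependent huv.1 hpq.1,
    ← not_dep_iff_linearIndependent huv.2 hpq.2] at hxor
  simp only [xor_def, not_not] at hxor ⊢
  tauto

theorem stmt_3 {H : Type*} [NormedAddCommGroup H] [InnerProductSpace ℂ H]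
    [CompleteSpace H] [TopologicalSpace.SeparableSpace H]
    (L : Set (Submodule ℂ H)) (hL : IsCSL L)
    (Φ : (H →L[ℂ] H) → (H →L[ℂ] H)) (hlin : IsLinearOnAlg L Φ)
    (hrank : RankPreserving L Φ)
    (N : Submodule ℂ H) (hN : N ∈ L)
    (hdimN : Module.rank ℂ N = 1)
    (hdimN' : 2 ≤ Module.rank ℂ (((minus L N)ᗮ : Submodule ℂ H) : Type _))
    (x f g u v p q : H)
    (hx : x ∈ N) (hx0 : x ≠ 0)
    (hf : f ∈ (minus L N)ᗮ) (hg : g ∈ (minus L N)ᗮ) (hfg : LinearIndependent ℂ ![f, g])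
    (hu : u ≠ 0) (hv : v ≠ 0) (hp : p ≠ 0) (hq : q ≠ 0)
    (hE : Φ (rankOne x f) = rankOne u v)
    (hF : Φ (rankOne x g) = rankOne p q) :
    Xor' (Dep u p ∧ ¬ Dep v q) (¬ Dep u p ∧ Dep v q) :=
  stmt_3_general hlin hrank hx hx0 hf hg hfg hE hF
end

section
/- Let L be a completely distributive commutative subspace lattice on H and let N, N' ∈ F. If N' ∉ 𝔊_N, then M ∩ M' = {0} for every M ∈ 𝔊_N and every M' ∈ 𝔊_{N'}; moreover G_N ⊥ G_{N'} and F_N ⊥ F_{N'}, where G_M = ⋁{K : K ∈ 𝔊_M} and F_M = ⋁{K₋^⊥ : K ∈ 𝔊_M}. -/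
open scoped InnerProductSpace

/-!
Complete distributivity gives Raney's separation property: if `X ⊄ E` with `E` closed, then some
`K ∈ F` satisfies `K ⊄ E` and `X ⊄ K₋`. Taking `X = M ∩ M'` and `E = {0}` yields a `K ∈ F` below
both `M` and `M'`; taking `X = H` and `E = M₋ ∨ M'₋` yields a `K ∈ F` above both. Either way `K`
links `M` to `M'`, so if these lie in different components, then `M ∩ M' = {0}` and
`M₋ ∨ M'₋ = H`. As the projections commute, the first equality forces `M ⊥ M'` and the second
`M₋^⊥ ⊥ M'₋^⊥`.
-/

open Filter Set Topology Relation

section CommutingProjections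

variable {𝕜 E : Type*} [RCLike 𝕜] [NormedAddCommGroup E] [InnerProductSpace 𝕜 E]
  {U V : Submodule 𝕜 E} [U.HasOrthogonalProjection] [V.HasOrthogonalProjection]

theorem isOrtho_of_commute_starProjection (hcomm : Commute U.starProjection V.starProjection)
    (hdisj : Disjoint U V) : U ⟂ V := by
  rw [← Submodule.starProjection_comp_starProjection_eq_zero_iff]
  ext x
  have hswap : U.starProjection (V.starProjection x) = V.starProjection (U.starProjection x) :=
    congr($hcomm.eq x)
  exact Submodule.disjoint_def.1 hdisj _ (U.starProjection_apply_mem _)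
    (hswap ▸ V.starProjection_apply_mem _)

theorem isOrtho_orthogonal_of_commute_starProjection
    (hcomm : Commute U.starProjection V.starProjection)
    (hdense : (U ⊔ V).topologicalClosure = ⊤) : Uᗮ ⟂ Vᗮ := by
  refine isOrtho_of_commute_starProjection ?_ ?_
  · simp only [Submodule.starProjection_orthogonal']
    exact (Commute.one_left _).sub_left ((Commute.one_right _).sub_right hcomm)
  · rw [disjoint_iff, Submodule.inf_orthogonal, ← Submodule.orthogonal_closure, hdense,
      Submodule.top_orthogonal_eq_bot]

end CommutingProjections

universe w in
theorem small_of_denseRange {X : Type*} [TopologicalSpace X] [T2Space X] {ι : Type w} {f : ι → X}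
    (hf : DenseRange f) : Small.{w} X := by
  suffices Function.Injective fun x ↦ comap f (𝓝 x) from small_of_injective this
  intro x y (hxy : comap f (𝓝 x) = comap f (𝓝 y))
  by_contra hne
  have hdisj : Disjoint (comap f (𝓝 x)) (comap f (𝓝 y)) := disjoint_comap (disjoint_nhds_nhds.2 hne)
  have hne_bot : (comap f (𝓝 y)).NeBot :=
    comap_neBot_iff_frequently.2 (mem_closure_iff_frequently.1 (hf y))
  exact hne_bot.ne (disjoint_self.1 (hxy ▸ hdisj))

section SubspaceLattice

variable {H : Type*} [NormedAddCommGroup H] [InnerProductSpace ℂ H]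
  {L S T : Set (Submodule ℂ H)} {E K M M' N N' X : Submodule ℂ H}

theorem le_closedJoin (hM : M ∈ S) : M ≤ closedJoin S :=
  (le_sSup hM).trans (Submodule.le_topologicalClosure _)

theorem closedJoin_le (hE : IsClosed (E : Set H)) (hS : ∀ M ∈ S, M ≤ E) : closedJoin S ≤ E :=
  Submodule.topologicalClosure_minimal _ (sSup_le hS) hE

theorem isOrtho_closedJoin (h : ∀ M ∈ S, ∀ M' ∈ T, M ⟂ M') : closedJoin S ⟂ closedJoin T := by
  have hle : closedJoin S ≤ (sSup T)ᗮ :=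
    closedJoin_le (Submodule.isClosed_orthogonal _) fun M hM ↦
      Submodule.isOrtho_sSup_right.2 fun M' hM' ↦ h M hM M' hM'
  rwa [← Submodule.orthogonal_closure] at hle

theorem le_of_not_le_minus (hK : K ∈ L) (h : ¬ K ≤ minus L M) : M ≤ K :=
  by_contra fun hMK ↦ h (le_closedJoin ⟨hK, hMK⟩)

theorem IsSubspaceLattice.inf_mem (hL : IsSubspaceLattice L) (hM : M ∈ L) (hM' : M' ∈ L) :
    M ⊓ M' ∈ L :=
  sInf_pair (a := M) ▸ hL.sInf_mem _ (pair_subset hM hM')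

theorem IsSubspaceLattice.minus_mem (hL : IsSubspaceLattice L) (M : Submodule ℂ H) :
    minus L M ∈ L :=
  hL.join_mem _ fun _ hE ↦ hE.1

section CompleteDistributivity

theorem IsCompletelyDistributive.iInf_closedJoin_range (hcd : IsCompletelyDistributive L)
    {ι : Type*} {κ : ι → Type*} [Small.{0} ι] [∀ i, Small.{0} (κ i)]
    {E : ∀ i, κ i → Submodule ℂ H} (hE : ∀ i j, E i j ∈ L) :
    ⨅ i, closedJoin (range (E i)) = closedJoin (range fun φ : ∀ i, κ i ↦ ⨅ i, E i (φ i)) := by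
  let e : Shrink.{0} ι ≃ ι := (equivShrink ι).symm
  let e' (a : Shrink.{0} ι) : Shrink.{0} (κ (e a)) ≃ κ (e a) := (equivShrink _).symm
  calc ⨅ i, closedJoin (range (E i))
    _ = ⨅ a, closedJoin (range (E (e a))) :=
      (e.iInf_comp (g := fun i ↦ closedJoin (range (E i)))).symm
    _ = ⨅ a, closedJoin (range fun b ↦ E (e a) (e' a b)) := by
      simp only [← (e' _).surjective.range_comp (E (e _)), Function.comp_def]
    _ = closedJoin (range fun ψ : ∀ a, Shrink.{0} (κ (e a)) ↦ ⨅ a, E (e a) (e' a (ψ a))) :=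
      (hcd _ _ _ fun _ _ ↦ hE _ _).1
    _ = closedJoin (range fun φ : ∀ i, κ i ↦ ⨅ i, E i (φ i)) := by
      rw [← (e.piCongr e').surjective.range_comp]
      simp only [Function.comp_def, ← e.iInf_comp, Equiv.piCongr_apply_apply]

-- `IsCompletelyDistributive` takes its index types in `Type`; smallness of `H` makes families
-- indexed by subspaces of `H` eligible, and it holds as soon as `H : Type` or `H` is separable.
variable [Small.{0} H]

/-- One half of Raney's characterization of complete distributivity. -/
theorem IsCompletelyDistributive.iInf_minus_le (hcd : IsCompletelyDistributive L)
    (hL : IsSubspaceLattice L) (hE : IsClosed (E : Set H)) :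
    ⨅ K : {K // K ∈ L ∧ ¬ K ≤ E}, minus L K ≤ E := by
  have : Small.{0} (Submodule ℂ H) := small_of_injective SetLike.coe_injective
  let D (K : {K // K ∈ L ∧ ¬ K ≤ E}) : {D // D ∈ L ∧ ¬ K.1 ≤ D} → Submodule ℂ H := Subtype.val
  have hD : ∀ K D', D K D' ∈ L := fun _ D' ↦ D'.2.1
  calc ⨅ K : {K // K ∈ L ∧ ¬ K ≤ E}, minus L K
    _ = ⨅ K, closedJoin (range (D K)) := by simp only [D, Subtype.range_coe_subtype, minus]
    _ = closedJoin (range fun φ : ∀ K, {D // D ∈ L ∧ ¬ K.1 ≤ D} ↦ ⨅ K, D K (φ K)) :=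
      hcd.iInf_closedJoin_range hD
    _ ≤ E := ?_
  refine closedJoin_le hE (forall_mem_range.2 fun φ ↦ by_contra fun hle ↦ ?_)
  -- The meet would itself be one of the `K`, yet it lies below `φ K`.
  have hmem : ⨅ K, D K (φ K) ∈ L := hL.sInf_mem _ (range_subset_iff.2 fun K ↦ hD K (φ K))
  exact (φ ⟨_, hmem, hle⟩).2.2 (iInf_le (fun K ↦ D K (φ K)) _)

theorem IsCompletelyDistributive.exists_mem_famF (hcd : IsCompletelyDistributive L)
    (hL : IsSubspaceLattice L) (hE : IsClosed (E : Set H)) (hXE : ¬ X ≤ E) :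
    ∃ K ∈ famF L, ¬ K ≤ E ∧ ¬ X ≤ minus L K := by
  contrapose! hXE with hX
  refine (le_iInf fun K ↦ ?_).trans (hcd.iInf_minus_le hL hE)
  by_contra hXK
  exact hXK (hX K ⟨K.2.1, fun hbot ↦ K.2.2 (hbot ▸ bot_le), fun htop ↦ hXK (htop ▸ le_top)⟩ K.2.2)

theorem IsCompletelyDistributive.exists_mem_famF_le (hcd : IsCompletelyDistributive L)
    (hL : IsSubspaceLattice L) (hM : M ∈ L) (hne : M ≠ ⊥) : ∃ K ∈ famF L, K ≤ M := by
  obtain ⟨K, hK, -, hMK⟩ := hcd.exists_mem_famF hL (hL.isClosed ⊥ hL.bot_mem) (mt le_bot_iff.1 hne)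
  exact ⟨K, hK, le_of_not_le_minus hM hMK⟩

theorem IsCompletelyDistributive.exists_mem_famF_not_le (hcd : IsCompletelyDistributive L)
    (hL : IsSubspaceLattice L) (hE : IsClosed (E : Set H)) (hne : E ≠ ⊤) :
    ∃ K ∈ famF L, ¬ K ≤ E := by
  obtain ⟨K, hK, hKE, -⟩ := hcd.exists_mem_famF hL hE (mt top_le_iff.1 hne)
  exact ⟨K, hK, hKE⟩

end CompleteDistributivity

/-- One step of a chain in `F`. The endpoints are required to lie in `F`, so that all the members
of a path of steps do. -/
def ChainStep (L : Set (Submodule ℂ H)) (M N : Submodule ℂ H) : Prop :=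
  M ∈ famF L ∧ N ∈ famF L ∧ Comparable' M N

instance ChainStep.stdSymm (L : Set (Submodule ℂ H)) : Std.Symm (ChainStep L) where
  symm _ _ h := ⟨h.2.1, h.1, h.2.2.symm⟩

theorem ChainConn.refl (hM : M ∈ famF L) : ChainConn L M M :=
  ⟨0, fun _ ↦ M, fun _ ↦ hM, rfl, rfl, fun k ↦ k.elim0⟩

theorem ChainConn.tail (h : ChainConn L M N) (hstep : ChainStep L N K) : ChainConn L M K := by
  obtain ⟨n, c, hc, rfl, rfl, hcomp⟩ := h
  refine ⟨n + 1, Fin.snoc (α := fun _ ↦ Submodule ℂ H) c K, fun k ↦ ?_, ?_, by simp, fun k ↦ ?_⟩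
  · cases k using Fin.lastCases with
    | last => simpa using hstep.2.1
    | cast i => simpa using hc i
  · rw [← Fin.castSucc_zero, Fin.snoc_castSucc]
  · cases k using Fin.lastCases with
    | last => simpa [Fin.succ_last] using hstep.2.2
    | cast i => simpa only [Fin.succ_castSucc, Fin.snoc_castSucc] using hcomp i

theorem chainConn_iff_reflTransGen :
    ChainConn L M N ↔ M ∈ famF L ∧ ReflTransGen (ChainStep L) M N := by
  constructor
  · rintro ⟨n, c, hc, rfl, rfl, hcomp⟩
    refine ⟨hc 0, ?_⟩
    induction Fin.last n using Fin.induction with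
    | zero => exact .refl
    | succ i ih => exact ih.tail ⟨hc _, hc _, hcomp i⟩
  · rintro ⟨hM, hpath⟩
    induction hpath with
    | refl => exact .refl hM
    | tail _ hstep ih => exact ih.tail hstep

theorem mem_GSet_iff :
    M ∈ GSet L N ↔ N ∈ famF L ∧ M ∈ famF L ∧ ReflTransGen (ChainStep L) N M :=
  (and_congr_right' chainConn_iff_reflTransGen).trans and_left_comm

theorem mem_GSet_of_comparable (hM : M ∈ GSet L N) (hM' : M' ∈ GSet L N') (hK : K ∈ famF L)
    (hMK : Comparable' M K) (hKM' : Comparable' K M') : N' ∈ GSet L N := by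
  rw [mem_GSet_iff] at hM hM' ⊢
  obtain ⟨hN, hMF, hNM⟩ := hM
  obtain ⟨hN', hM'F, hN'M'⟩ := hM'
  have hNM' : ReflTransGen (ChainStep L) N M' :=
    (hNM.tail ⟨hMF, hK, hMK⟩).tail ⟨hK, hM'F, hKM'⟩
  exact ⟨hN, hN', hNM'.trans (symm hN'M')⟩

section Components

variable [Small.{0} H]

theorem inf_eq_bot_of_notMem_GSet (hL : IsSubspaceLattice L) (hcd : IsCompletelyDistributive L)
    (h : N' ∉ GSet L N) (hM : M ∈ GSet L N) (hM' : M' ∈ GSet L N') : M ⊓ M' = ⊥ := by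
  by_contra hne
  obtain ⟨K, hK, hle⟩ := hcd.exists_mem_famF_le hL (hL.inf_mem hM.1.1 hM'.1.1) hne
  exact h (mem_GSet_of_comparable hM hM' hK (.inr (hle.trans inf_le_left))
    (.inl (hle.trans inf_le_right)))

theorem closedJoin_minus_eq_top_of_notMem_GSet (hL : IsSubspaceLattice L)
    (hcd : IsCompletelyDistributive L) (h : N' ∉ GSet L N) (hM : M ∈ GSet L N)
    (hM' : M' ∈ GSet L N') : closedJoin {minus L M, minus L M'} = ⊤ := by
  by_contra hne
  obtain ⟨K, hK, hnle⟩ :=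
    hcd.exists_mem_famF_not_le hL (Submodule.isClosed_topologicalClosure _) hne
  have hle {A : Submodule ℂ H} (hA : minus L A ∈ ({minus L M, minus L M'} : Set _)) : A ≤ K :=
    le_of_not_le_minus hK.1 fun hKA ↦ hnle (hKA.trans (le_closedJoin hA))
  exact h (mem_GSet_of_comparable hM hM' hK (.inl (hle (by simp))) (.inr (hle (by simp))))

end Components

variable [CompleteSpace H]

theorem projOf_eq_starProjection (E : Submodule ℂ H) [E.HasOrthogonalProjection] :
    projOf E = E.starProjection := by
  have hE : IsClosed (E : Set H) := E.orthogonal_orthogonal ▸ Submodule.isClosed_orthogonal _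
  rw [projOf, dif_pos hE]
  rfl

theorem IsSubspaceLattice.hasOrthogonalProjection (hL : IsSubspaceLattice L) (hE : E ∈ L) :
    E.HasOrthogonalProjection :=
  have := (hL.isClosed E hE).completeSpace_coe
  inferInstance

theorem IsCSL.commute_starProjection (hL : IsCSL L) [M.HasOrthogonalProjection]
    [M'.HasOrthogonalProjection] (hM : M ∈ L) (hM' : M' ∈ L) :
    Commute M.starProjection M'.starProjection := by
  simpa only [projOf_eq_starProjection, commute_iff_eq] using hL.commutes M hM M' hM'

theorem IsCSL.isOrtho_of_inf_eq_bot (hL : IsCSL L) (hM : M ∈ L) (hM' : M' ∈ L)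
    (h : M ⊓ M' = ⊥) : M ⟂ M' :=
  have := hL.hasOrthogonalProjection hM
  have := hL.hasOrthogonalProjection hM'
  isOrtho_of_commute_starProjection (hL.commute_starProjection hM hM') (disjoint_iff.2 h)

theorem IsCSL.isOrtho_orthogonal_of_closedJoin_eq_top (hL : IsCSL L) (hM : M ∈ L) (hM' : M' ∈ L)
    (h : closedJoin {M, M'} = ⊤) : Mᗮ ⟂ M'ᗮ :=
  have := hL.hasOrthogonalProjection hM
  have := hL.hasOrthogonalProjection hM'
  isOrtho_orthogonal_of_commute_starProjection (hL.commute_starProjection hM hM')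
    (by rwa [closedJoin, sSup_pair] at h)

end SubspaceLattice

theorem stmt_13_general {H : Type*} [NormedAddCommGroup H] [InnerProductSpace ℂ H]
    [CompleteSpace H] [Small.{0} H]
    (L : Set (Submodule ℂ H)) (hL : IsCSL L) (hcd : IsCompletelyDistributive L)
    (N N' : Submodule ℂ H) (h : N' ∉ GSet L N) :
    (∀ M ∈ GSet L N, ∀ M' ∈ GSet L N', M ⊓ M' = ⊥) ∧
    closedJoin (GSet L N) ≤ (closedJoin (GSet L N'))ᗮ ∧
    closedJoin ((fun M => ((minus L M)ᗮ : Submodule ℂ H)) '' GSet L N)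
      ≤ (closedJoin ((fun M => ((minus L M)ᗮ : Submodule ℂ H)) '' GSet L N'))ᗮ := by
  have hinf : ∀ M ∈ GSet L N, ∀ M' ∈ GSet L N', M ⊓ M' = ⊥ := fun M hM M' hM' ↦
    inf_eq_bot_of_notMem_GSet hL.toIsSubspaceLattice hcd h hM hM'
  refine ⟨hinf, isOrtho_closedJoin fun M hM M' hM' ↦ ?_, isOrtho_closedJoin ?_⟩
  · exact hL.isOrtho_of_inf_eq_bot hM.1.1 hM'.1.1 (hinf M hM M' hM')
  · rintro _ ⟨M, hM, rfl⟩ _ ⟨M', hM', rfl⟩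
    exact hL.isOrtho_orthogonal_of_closedJoin_eq_top (hL.minus_mem M) (hL.minus_mem M')
      (closedJoin_minus_eq_top_of_notMem_GSet hL.toIsSubspaceLattice hcd h hM hM')

theorem stmt_13 {H : Type*} [NormedAddCommGroup H] [InnerProductSpace ℂ H]
    [CompleteSpace H] [TopologicalSpace.SeparableSpace H]
    (L : Set (Submodule ℂ H)) (hL : IsCSL L) (hcd : IsCompletelyDistributive L)
    (N N' : Submodule ℂ H) (hN : N ∈ famF L) (hN' : N' ∈ famF L)
    (h : N' ∉ GSet L N) :
    (∀ M ∈ GSet L N, ∀ M' ∈ GSet L N', M ⊓ M' = ⊥) ∧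
    closedJoin (GSet L N) ≤ (closedJoin (GSet L N'))ᗮ ∧
    closedJoin ((fun M => ((minus L M)ᗮ : Submodule ℂ H)) '' GSet L N)
      ≤ (closedJoin ((fun M => ((minus L M)ᗮ : Submodule ℂ H)) '' GSet L N'))ᗮ := by
  have : Small.{0} H := small_of_denseRange (TopologicalSpace.denseRange_denseSeq H)
  exact stmt_13_general L hL hcd N N' h
end
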